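/- For each λ > 0 let ê λ be a smooth frame on ℝ⁴ with dual coframe (ê λ)*, and let f be a smooth frame on ℝ⁴ with dual coframe f*. Suppose that, pointwise in x as λ → 0⁺: (ê λ)* 0 x → f* 0 x; λ^{-1/2} • (ê λ)* i x → f* i x for i = 1, 2, 3; fderiv ℝ (ê λ 0) x → fderiv ℝ (f 0) x; and fderiv ℝ (√λ • ê λ i) x → fderiv ℝ (f i) x for i = 1, 2, 3. Then the connecting field of ê λ converges pointwise to the connecting field of f: for all x, a, b, c, Σ_i ((ê λ)* i x) c * ∂_b (ê λ i)^a (x) → Σ_i (f* i x) c * ∂_b (f i)^a (x) as λ → 0⁺. In particular, no further assumption is needed for the limiting derivative operator to exist, and the limit is the derivative operator parallelising the limiting frame f. -/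

import Mathlib

noncomputable section

open Filter Topology

/-- ℝ⁴, modelled as `Fin 4 → ℝ`. -/
abbrev E4 : Type := Fin 4 → ℝ

/-- Coordinate partial derivative `∂_b g (x)`. -/
def pd (g : E4 → E4) (b : Fin 4) (x : E4) : E4 :=
  fderiv ℝ g x (Pi.single b 1)

/-- `fs` is the dual coframe of the frame `f`. -/
def IsDualCoframe (f fs : Fin 4 → (E4 → E4)) : Prop :=
  ∀ (x : E4) (i j : Fin 4), (∑ a, fs i x a * f j x a) = if i = j then 1 else 0

/-- A smooth frame on ℝ⁴: four smooth vector fields forming a basis at every point. -/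
def IsSmoothFrame (f : Fin 4 → (E4 → E4)) : Prop :=
  (∀ i, ContDiff ℝ (⊤ : ℕ∞) (f i)) ∧ ∀ x : E4, LinearIndependent ℝ (fun i => f i x)

/-- Connecting field `C_f x a b c = Σ_i (f* i x) c * ∂_b (f i)^a (x)` of the frame `f`
with dual coframe `fs`. -/
def conn (f fs : Fin 4 → (E4 → E4)) (x : E4) (a b c : Fin 4) : ℝ :=
  ∑ i, fs i x c * pd (f i) b x a

/-- Torsion of the connecting field of the frame `f` with dual coframe `fs`. -/
def torsion (f fs : Fin 4 → (E4 → E4)) (x : E4) (a b c : Fin 4) : ℝ :=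
  conn f fs x a b c - conn f fs x a c b

/-- Lie bracket of vector fields on ℝ⁴. -/
def lie (X Y : E4 → E4) (x : E4) : E4 :=
  fderiv ℝ Y x (X x) - fderiv ℝ X x (Y x)

/-- if a λ-family of smooth frames `ê λ` converges to a smooth frame `f`
in the sense that, pointwise, `(ê λ)* 0 → f* 0`, `λ^{-1/2} • (ê λ)* i → f* i`
(i = 1,2,3), `fderiv (ê λ 0) → fderiv (f 0)` and `fderiv (√λ • ê λ i) → fderiv (f i)`
(i = 1,2,3), then the connecting field of `ê λ` converges pointwise to the connecting
field of `f` — no further assumption is needed. -/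
theorem stmt8
    (eh ehs : ℝ → Fin 4 → (E4 → E4))
    (hehframe : ∀ l : ℝ, 0 < l → IsSmoothFrame (eh l))
    (hehdual : ∀ l : ℝ, 0 < l → IsDualCoframe (eh l) (ehs l))
    (f fs : Fin 4 → (E4 → E4))
    (hfframe : IsSmoothFrame f)
    (hfdual : IsDualCoframe f fs)
    (hcoframe0 : ∀ x : E4,
      Tendsto (fun l : ℝ => ehs l 0 x) (nhdsWithin 0 (Set.Ioi 0)) (nhds (fs 0 x)))
    (hcoframei : ∀ i : Fin 4, i ≠ 0 → ∀ x : E4,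
      Tendsto (fun l : ℝ => (Real.sqrt l)⁻¹ • ehs l i x) (nhdsWithin 0 (Set.Ioi 0))
        (nhds (fs i x)))
    (hderiv0 : ∀ x : E4,
      Tendsto (fun l : ℝ => fderiv ℝ (eh l 0) x) (nhdsWithin 0 (Set.Ioi 0))
        (nhds (fderiv ℝ (f 0) x)))
    (hderivi : ∀ i : Fin 4, i ≠ 0 → ∀ x : E4,
      Tendsto (fun l : ℝ => fderiv ℝ (Real.sqrt l • eh l i) x) (nhdsWithin 0 (Set.Ioi 0))
        (nhds (fderiv ℝ (f i) x))) :
    ∀ (x : E4) (a b c : Fin 4),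
      Tendsto (fun l : ℝ => conn (eh l) (ehs l) x a b c) (nhdsWithin 0 (Set.Ioi 0))
        (nhds (conn f fs x a b c)) := by
  intro x a b c
  unfold conn
  refine tendsto_finsetSum _ fun i _ => ?_
  have happ : ∀ (F : ℝ → E4 →L[ℝ] E4) (F₀ : E4 →L[ℝ] E4),
      Tendsto F (nhdsWithin 0 (Set.Ioi 0)) (nhds F₀) →
      Tendsto (fun l => F l (Pi.single b 1) a) (nhdsWithin 0 (Set.Ioi 0))
        (nhds (F₀ (Pi.single b 1) a)) := by
    intro F F₀ hF
    have h1 : Continuous (fun G : E4 →L[ℝ] E4 => G (Pi.single b 1) a) := by fun_prop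
    exact (h1.tendsto F₀).comp hF
  by_cases hi : i = 0
  · subst hi
    exact ((tendsto_pi_nhds.1 (hcoframe0 x)) c).mul (happ _ _ (hderiv0 x))
  · have h := ((tendsto_pi_nhds.1 (hcoframei i hi x)) c).mul (happ _ _ (hderivi i hi x))
    refine h.congr' ?_
    filter_upwards [self_mem_nhdsWithin] with l hl
    have hl' : 0 < l := hl
    have hs : Real.sqrt l ≠ 0 := (Real.sqrt_pos.2 hl').ne'
    have hd : DifferentiableAt ℝ (eh l i) x :=
      (((hehframe l hl').1 i).differentiable (by simp)) x
    rw [fderiv_const_smul hd]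
    simp only [pd, Pi.smul_apply, smul_eq_mul, ContinuousLinearMap.smul_apply]
    field_simp
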